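/- Let f(x) = ½⟨x, H x⟩ + ⟨b, x⟩ + c be quadratic with H ∈ ℝ^{N×N} symmetric positive definite, b ∈ ℝ^N, c ∈ ℝ, so ∇f(x) = H x + b. Let T ∈ ℝ^{N×N} be symmetric with M := T − H symmetric positive definite, and let d ∈ ℝ^N, d ≠ 0. Then for every fixed x̄, x ∈ ℝ^N the function β ↦ f(y_β) + ⟨∇f(y_β), x − y_β⟩ + ½‖x − y_β‖_T², where y_β := x̄ + β d for β ∈ ℝ, attains its unique minimum at β* = ⟨d, x − x̄⟩_M / ⟨d, d⟩_M, and at β = β* its value equals f(x̄) + ⟨∇f(x̄), x − x̄⟩ + ½‖x − x̄‖_Q², where Q := T − u uᵀ with u := M d / ‖d‖_M. -/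

import Mathlib

/-!
For a quadratic `f` with Hessian `H`, the first-order model of `f` at `y` misses `f x` by exactly
`½‖x − y‖_H²`, so the objective is `f x + ½‖x − y‖_M²` with `M = T − H`. Along `y = x̄ + β d` this
is a quadratic polynomial in `β` with leading coefficient `½‖d‖_M² > 0`; completing the square
gives the unique minimiser, and the decrease relative to `β = 0` is
`½⟨d, x − x̄⟩_M² / ‖d‖_M² = ½⟨u, x − x̄⟩²`, which is the rank-one correction in `Q`.
-/

open Matrix

/-- The extrapolated proximal gradient objective
`f(y) + ⟨∇f(y), x − y⟩ + ½‖x − y‖_T²` evaluated at the extrapolated point `y`. -/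
noncomputable def epgObj {N : ℕ} (f : (Fin N → ℝ) → ℝ) (f' : (Fin N → ℝ) → Fin N → ℝ)
    (T : Matrix (Fin N) (Fin N) ℝ) (x y : Fin N → ℝ) : ℝ :=
  f y + f' y ⬝ᵥ (x - y) + 1 / 2 * ((x - y) ⬝ᵥ (T *ᵥ (x - y)))

theorem dotProduct_mulVec_comm_of_isSymm {N : ℕ} {A : Matrix (Fin N) (Fin N) ℝ}
    (hA : A.IsSymm) (v w : Fin N → ℝ) : v ⬝ᵥ (A *ᵥ w) = w ⬝ᵥ (A *ᵥ v) := by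
  rw [dotProduct_mulVec, ← mulVec_transpose, hA.eq, dotProduct_comm]

/-- The objective is the exact value `f x` plus half the squared `(T − H)`-distance to `y`. -/
theorem epgObj_quadratic {N : ℕ} {H : Matrix (Fin N) (Fin N) ℝ} (hH : H.IsSymm)
    (T : Matrix (Fin N) (Fin N) ℝ) (b : Fin N → ℝ) (c : ℝ) (f : (Fin N → ℝ) → ℝ)
    (hf : ∀ z, f z = 1 / 2 * (z ⬝ᵥ (H *ᵥ z)) + b ⬝ᵥ z + c) (x y : Fin N → ℝ) :
    epgObj f (fun z => H *ᵥ z + b) T x y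
      = f x + 1 / 2 * ((x - y) ⬝ᵥ ((T - H) *ᵥ (x - y))) := by
  have h := dotProduct_mulVec_comm_of_isSymm hH x y
  have h1 := dotProduct_comm (H *ᵥ y) x
  have h2 := dotProduct_comm (H *ᵥ y) y
  simp only [epgObj, hf, sub_mulVec, mulVec_sub, dotProduct_sub, sub_dotProduct, add_dotProduct,
    h1, h2]
  linarith

/-- Expansion of `‖w − β d‖_A²` in powers of `β`. -/
theorem quadForm_sub_smul {N : ℕ} {A : Matrix (Fin N) (Fin N) ℝ} (hA : A.IsSymm)
    (w d : Fin N → ℝ) (β : ℝ) :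
    (w - β • d) ⬝ᵥ (A *ᵥ (w - β • d))
      = w ⬝ᵥ (A *ᵥ w) - 2 * β * (d ⬝ᵥ (A *ᵥ w)) + β ^ 2 * (d ⬝ᵥ (A *ᵥ d)) := by
  have h := dotProduct_mulVec_comm_of_isSymm hA w d
  simp only [mulVec_sub, mulVec_smul, dotProduct_sub, sub_dotProduct, smul_dotProduct,
    dotProduct_smul, smul_eq_mul, h]
  ring

/-- Corollary 4.6 (the rank-1 case): for a quadratic `f x = ½⟨x, H x⟩ + ⟨b, x⟩ + c` with `H`
symmetric positive definite, `T` symmetric with `M := T − H` symmetric positive definite and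
`d ≠ 0`, the function `β ↦ f(y_β) + ⟨∇f(y_β), x − y_β⟩ + ½‖x − y_β‖_T²` with
`y_β := x̄ + β d` attains its unique minimum at `β* = ⟨d, x − x̄⟩_M / ⟨d, d⟩_M`, and its value
there equals `f(x̄) + ⟨∇f(x̄), x − x̄⟩ + ½‖x − x̄‖_Q²` with `Q := T − u uᵀ`,
`u := M d / ‖d‖_M`. -/
theorem rank_one_epg_equals_sr1 {N : ℕ}
    (H T M : Matrix (Fin N) (Fin N) ℝ) (hH : H.PosDef) (hT : T.IsSymm)
    (hM : M = T - H) (hMpd : M.PosDef)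
    (b : Fin N → ℝ) (c : ℝ)
    (f : (Fin N → ℝ) → ℝ)
    (hf : ∀ z, f z = 1 / 2 * (z ⬝ᵥ (H *ᵥ z)) + b ⬝ᵥ z + c)
    (d : Fin N → ℝ) (hd : d ≠ 0)
    (xb x : Fin N → ℝ)
    (βstar : ℝ) (hβ : βstar = d ⬝ᵥ (M *ᵥ (x - xb)) / (d ⬝ᵥ (M *ᵥ d)))
    (u : Fin N → ℝ) (hu : u = (Real.sqrt (d ⬝ᵥ (M *ᵥ d)))⁻¹ • (M *ᵥ d))
    (Q : Matrix (Fin N) (Fin N) ℝ) (hQ : Q = T - vecMulVec u u) :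
    (∀ β : ℝ, β ≠ βstar →
        epgObj f (fun z => H *ᵥ z + b) T x (xb + βstar • d)
          < epgObj f (fun z => H *ᵥ z + b) T x (xb + β • d)) ∧
      epgObj f (fun z => H *ᵥ z + b) T x (xb + βstar • d)
        = f xb + (H *ᵥ xb + b) ⬝ᵥ (x - xb)
          + 1 / 2 * ((x - xb) ⬝ᵥ (Q *ᵥ (x - xb))) := by
  have hHs : H.IsSymm := by simpa using hH.isHermitian
  have hMs : M.IsSymm := by simpa using hMpd.isHermitian
  have hp : 0 < d ⬝ᵥ (M *ᵥ d) := by simpa using hMpd.dotProduct_mulVec_pos hd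
  have key : ∀ β : ℝ, epgObj f (fun z => H *ᵥ z + b) T x (xb + β • d)
      = f x + 1 / 2 * ((x - xb) ⬝ᵥ (M *ᵥ (x - xb)) - 2 * β * (d ⬝ᵥ (M *ᵥ (x - xb)))
        + β ^ 2 * (d ⬝ᵥ (M *ᵥ d))) := fun β => by
    rw [epgObj_quadratic hHs T b c f hf, ← hM, ← sub_sub, quadForm_sub_smul hMs]
  have hq : βstar * (d ⬝ᵥ (M *ᵥ d)) = d ⬝ᵥ (M *ᵥ (x - xb)) := by
    rw [hβ, div_mul_cancel₀ _ hp.ne']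
  refine ⟨fun β hne => ?_, ?_⟩
  · have hpos := mul_pos (pow_pos (abs_pos.mpr (sub_ne_zero.mpr hne)) 2) hp
    rw [sq_abs] at hpos
    rw [key, key, ← hq]
    linarith
  · have hu' : (x - xb) ⬝ᵥ (vecMulVec u u *ᵥ (x - xb)) = βstar ^ 2 * (d ⬝ᵥ (M *ᵥ d)) := by
      have huw : u ⬝ᵥ (x - xb) = (√(d ⬝ᵥ (M *ᵥ d)))⁻¹ * (βstar * (d ⬝ᵥ (M *ᵥ d))) := by
        rw [hq, hu, smul_dotProduct, smul_eq_mul, dotProduct_comm (M *ᵥ d),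
          dotProduct_mulVec_comm_of_isSymm hMs (x - xb)]
      have hsq : (x - xb) ⬝ᵥ (vecMulVec u u *ᵥ (x - xb)) = (u ⬝ᵥ (x - xb)) ^ 2 := by
        rw [vecMulVec_mulVec, dotProduct_smul, dotProduct_comm (x - xb) u]
        simp [sq]
      rw [hsq, huw, mul_pow, inv_pow, Real.sq_sqrt hp.le]
      field_simp
    -- The exact second-order Taylor expansion of `f` at `xb`, obtained at `T = 0`, `y = xb`.
    have htaylor := epgObj_quadratic hHs 0 b c f hf x xb
    simp only [epgObj, zero_sub, neg_mulVec, zero_mulVec, dotProduct_zero, dotProduct_neg]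
      at htaylor
    rw [key, ← hq, hQ, sub_mulVec, dotProduct_sub (x - xb) (T *ᵥ (x - xb)), hu']
    have hsplit : (x - xb) ⬝ᵥ (M *ᵥ (x - xb))
        = (x - xb) ⬝ᵥ (T *ᵥ (x - xb)) - (x - xb) ⬝ᵥ (H *ᵥ (x - xb)) := by
      rw [hM, sub_mulVec, dotProduct_sub]
    rw [hsplit]
    linarith
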